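/- Let P and Q be finite partially ordered sets and f : P → Q an order-preserving map. If for every q ∈ Q the geometric realization of the subposet f⁻¹(Q_{≤q}) = {p ∈ P : f(p) ≤ q} (with the order induced from P) is contractible, then |P| and |Q| are homotopy equivalent. -/

import Mathlib

open Classical

/-- The geometric realization of (the order complex of) a finite poset `P`:
points are convex combinations of elements of `P` whose support is a chain,
topologized as a subspace of `P → ℝ`. -/
abbrev GeomReal (P : Type*) [Fintype P] [PartialOrder P] : Type _ :=
  { f : P → ℝ // (∀ p, 0 ≤ f p) ∧ (∑ p, f p = 1) ∧ IsChain (· ≤ ·) {p | f p ≠ 0} }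

/-!
The mapping cylinder of `f` is the disjoint union of `P` and `Q`, with `p` put below `q` whenever
`f p ≤ q`. Adding a vertex `x` to a clique complex attaches a cone over the link of `x`, which is a
homotopy equivalence when that link is contractible; and the link is contractible as soon as it is
the join of a contractible subcomplex with something else. Adding the elements of `Q` to `P` from
the top down, the link of `q` is the join of the fiber over `Q_{≤ q}` with `Q_{> q}`. Adding the
elements of `P` to `Q` from the bottom up, the link of `p` is the join of the vertex `f p` with
other elements. So both ends of the cylinder include by homotopy equivalences, and collapsing the
cylinder onto `Q` turns the inclusion of `P` into `|f|`.
-/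

open ContinuousMap Function Set Topology
open scoped unitInterval

section HomotopyEquivalence

variable {X Y Z : Type*} [TopologicalSpace X] [TopologicalSpace Y] [TopologicalSpace Z]

/-- A continuous map is a homotopy equivalence if it is the forward map of some `X ≃ₕ Y`. Unlike
`Nonempty (X ≃ₕ Y)`, this remembers which map realizes the equivalence. -/
def IsHomotopyEquiv (f : C(X, Y)) : Prop :=
  ∃ e : X ≃ₕ Y, e.toFun = f

theorem isHomotopyEquiv_homeomorph (e : X ≃ₜ Y) : IsHomotopyEquiv (e : C(X, Y)) :=
  ⟨e.toHomotopyEquiv, rfl⟩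

theorem IsHomotopyEquiv.comp {g : C(Y, Z)} {f : C(X, Y)} (hg : IsHomotopyEquiv g)
    (hf : IsHomotopyEquiv f) : IsHomotopyEquiv (g.comp f) := by
  obtain ⟨e, rfl⟩ := hf
  obtain ⟨e', rfl⟩ := hg
  exact ⟨e.trans e', rfl⟩

theorem IsHomotopyEquiv.contractibleSpace [ContractibleSpace X] {f : C(X, Y)}
    (hf : IsHomotopyEquiv f) : ContractibleSpace Y := by
  obtain ⟨e, -⟩ := hf
  exact e.symm.contractibleSpace

theorem IsHomotopyEquiv.of_comp_homotopic_id {j : C(X, Y)} {r : C(Y, X)} (hj : IsHomotopyEquiv j)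
    (hrj : (r.comp j).Homotopic (.id X)) : IsHomotopyEquiv r := by
  obtain ⟨e, rfl⟩ := hj
  have unit_right : (e.toFun.comp r).Homotopic ((e.toFun.comp r).comp (e.toFun.comp e.invFun)) :=
    Homotopic.comp (.refl (e.toFun.comp r)) e.right_inv.symm
  have cancel_middle : (e.toFun.comp ((r.comp e.toFun).comp e.invFun)).Homotopic
      (e.toFun.comp e.invFun) := .comp (.refl _) (.comp hrj (.refl _))
  exact ⟨⟨r, e.toFun, unit_right.trans (cancel_middle.trans e.right_inv), hrj⟩, rfl⟩

end HomotopyEquivalence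

section MappingCone

variable {A K X Y : Type*} [TopologicalSpace A] [TopologicalSpace K] [TopologicalSpace X]
  [TopologicalSpace Y]

/-- `IsMappingCone i j q` says that `X` is the mapping cone of `i : K → A`: the map `j` embeds the
base `A`, and `q` parametrizes the cone over `K`, which is glued to `A` along `i` at parameter `0`
and collapsed to the apex at parameter `1`. -/
structure IsMappingCone (i : C(K, A)) (j : C(A, X)) (q : C(K × I, X)) : Prop where
  base : ∀ k, q (k, 0) = j (i k)
  apex : ∀ k k', q (k, 1) = q (k', 1)
  injective : Injective j
  eq_zero_of_eq : ∀ {k t a}, q (k, t) = j a → t = 0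
  eq_or_of_eq : ∀ {k k' t t'}, q (k, t) = q (k', t') → t = t' ∧ (t = 0 ∨ t = 1 ∨ k = k')
  isQuotientMap : IsQuotientMap (Sum.elim j q)

namespace IsMappingCone

variable {i : C(K, A)} {j : C(A, X)} {q : C(K × I, X)}

theorem forall_iff (hX : IsMappingCone i j q) {p : X → Prop} :
    (∀ x, p x) ↔ (∀ a, p (j a)) ∧ ∀ k t, p (q (k, t)) := by
  simp [hX.isQuotientMap.surjective.forall]

theorem exists_desc (hX : IsMappingCone i j q) (g : C(A, Y)) (h : C(K × I, Y))
    (h₀ : ∀ k, h (k, 0) = g (i k)) (h₁ : ∀ k k', h (k, 1) = h (k', 1)) :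
    ∃ F : C(X, Y), (∀ a, F (j a) = g a) ∧ ∀ z, F (q z) = h z := by
  let π : C(A ⊕ K × I, X) := ⟨Sum.elim j q, hX.isQuotientMap.continuous⟩
  let φ : C(A ⊕ K × I, Y) := ⟨Sum.elim g h, by fun_prop⟩
  have cone_base {k t a} (e : q (k, t) = j a) : h (k, t) = g a := by
    obtain rfl := hX.eq_zero_of_eq e
    rw [h₀, hX.injective ((hX.base k).symm.trans e)]
  have cone_cone {k k' t t'} (e : q (k, t) = q (k', t')) : h (k, t) = h (k', t') := by
    obtain ⟨rfl, rfl | rfl | rfl⟩ := hX.eq_or_of_eq e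
    · rw [cone_base (e.trans (hX.base k')), h₀]
    · exact h₁ k k'
    · rfl
  have hφ : FactorsThrough φ π := by
    rintro (a | ⟨k, t⟩) (a' | ⟨k', t'⟩) e
    · exact congrArg g (hX.injective e)
    · exact (cone_base e.symm).symm
    · exact cone_base e
    · exact cone_cone e
  let F : C(X, Y) := IsQuotientMap.lift (f := π) hX.isQuotientMap φ hφ
  have hF : ∀ d, F (π d) = φ d :=
    DFunLike.congr_fun (IsQuotientMap.lift_comp (f := π) hX.isQuotientMap φ hφ)
  exact ⟨F, fun a => hF (.inl a), fun z => hF (.inr z)⟩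

theorem homotopic (hX : IsMappingCone i j q) {f₀ f₁ : C(X, Y)} (hj : ∀ a, f₀ (j a) = f₁ (j a))
    (H : C(I × (K × I), Y)) (H_zero : ∀ z, H (0, z) = f₀ (q z)) (H_one : ∀ z, H (1, z) = f₁ (q z))
    (H_base : ∀ s k, H (s, (k, 0)) = f₀ (q (k, 0)))
    (H_apex : ∀ s k k', H (s, (k, 1)) = H (s, (k', 1))) : f₀.Homotopic f₁ := by
  obtain ⟨F, hFj, hFq⟩ := hX.exists_desc (Y := C(I, Y))
    (ContinuousMap.curry ⟨fun z : A × I => f₀ (j z.1), by fun_prop⟩)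
    (ContinuousMap.curry ⟨fun z : (K × I) × I => H (z.2, z.1), by fun_prop⟩)
    (fun k => by ext s; simp [H_base, hX.base]) (fun k k' => by ext s; exact H_apex s k k')
  refine ⟨⟨⟨fun z => F z.2 z.1, by fun_prop⟩, ?_, ?_⟩⟩
  · exact hX.forall_iff.2 ⟨fun a => by simp [hFj], fun k t => by simp [hFq, H_zero]⟩
  · exact hX.forall_iff.2 ⟨fun a => by simp [hFj, hj], fun k t => by simp [hFq, H_one]⟩

theorem isHomotopyEquiv [ContractibleSpace K] (hX : IsMappingCone i j q) : IsHomotopyEquiv j := by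
  obtain ⟨c, ⟨H⟩⟩ := id_nullhomotopic K
  obtain ⟨ρ, ρ_base, ρ_cone⟩ := hX.exists_desc (.id A)
    ⟨fun z => i (H (z.2, z.1)), by fun_prop⟩ (by simp) (by simp)
  obtain ⟨slide, slide_base, slide_cone⟩ := hX.exists_desc j
    ⟨fun z => q (H (z.2, z.1), z.2), by fun_prop⟩ (by simp [hX.base]) (by simp)
  have id_slide : (ContinuousMap.id X).Homotopic slide :=
    hX.homotopic (by simp [slide_base])
      ⟨fun z => q (H (z.1 * z.2.2, z.2.1), z.2.2), by fun_prop⟩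
      (by simp) (by simp [slide_cone]) (by simp) (fun _ _ _ => hX.apex _ _)
  have slide_ρ : slide.Homotopic (j.comp ρ) :=
    hX.homotopic (by simp [slide_base, ρ_base])
      ⟨fun z => q (H (z.2.2, z.2.1), σ z.1 * z.2.2), by fun_prop⟩
      (by simp [slide_cone]) (by simp [ρ_cone, hX.base]) (by simp [slide_cone]) (by simp)
  have ρ_j : ρ.comp j = .id A := ContinuousMap.ext ρ_base
  exact ⟨⟨j, ρ, ρ_j ▸ .refl _, (id_slide.trans slide_ρ).symm⟩, rfl⟩

end IsMappingCone

end MappingCone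

section CliqueRealization

variable {V : Type*} {x : V}

/-- The point dividing the segment from `k` to the vertex `x` in the ratio `t : 1 - t`. -/
noncomputable def conePoint (x : V) (k : V → ℝ) (t : ℝ) : V → ℝ :=
  (1 - t) • k + t • Pi.single x 1

theorem conePoint_apply_self {k : V → ℝ} (hk : k x = 0) (t : ℝ) : conePoint x k t x = t := by
  simp [conePoint, hk]

variable [Fintype V] {G : SimpleGraph V} {S T : Set V}

/-- The geometric realization of the complex of cliques of `G` with vertices in `S`, as a subset of
the standard simplex. Keeping the ambient space `V → ℝ` fixed, rather than passing to the induced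
subgraph, makes the realizations for varying `S` into honest subsets of each other. -/
def cliqueRealization (G : SimpleGraph V) (S : Set V) : Set (V → ℝ) :=
  {y ∈ stdSimplex ℝ V | support y ⊆ S ∧ G.IsClique (support y)}

theorem cliqueRealization_mono (h : S ⊆ T) : cliqueRealization G S ⊆ cliqueRealization G T :=
  fun _ ⟨hy, hyS, hyG⟩ => ⟨hy, hyS.trans h, hyG⟩

theorem isClosed_cliqueRealization : IsClosed (cliqueRealization G S) := by
  have eq_inter : cliqueRealization G S = stdSimplex ℝ V ∩ ((⋂ v ∉ S, {y | y v = 0}) ∩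
      ⋂ (v) (w) (_ : v ≠ w) (_ : ¬ G.Adj v w), {y | y v * y w = 0}) := by
    ext y
    simp only [cliqueRealization, mem_ofPred_eq, mem_inter_iff, mem_iInter, support_subset_iff',
      SimpleGraph.isClique_iff, Set.Pairwise, mem_support, mul_eq_zero]
    grind
  rw [eq_inter]
  refine (isClosed_stdSimplex ℝ V).inter (.inter ?_ ?_)
  · exact isClosed_biInter fun v _ => isClosed_eq (by fun_prop) continuous_const
  · exact isClosed_iInter fun v => isClosed_iInter fun w => isClosed_iInter fun _ =>
      isClosed_iInter fun _ => isClosed_eq (by fun_prop) continuous_const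

instance compactSpace_cliqueRealization : CompactSpace (cliqueRealization G S) :=
  isCompact_iff_compactSpace.1 <|
    (isCompact_stdSimplex ℝ V).of_isClosed_subset isClosed_cliqueRealization fun _ hy => hy.1

theorem mem_cliqueRealization_of_apply_eq_zero {y : V → ℝ}
    (hy : y ∈ cliqueRealization G (insert x S)) (hx : y x = 0) : y ∈ cliqueRealization G S :=
  ⟨hy.1, fun v hv => (hy.2.1 hv).resolve_left (by rintro rfl; exact hv hx), hy.2.2⟩

theorem apply_eq_zero_of_mem_cliqueRealization {y : V → ℝ} (hy : y ∈ cliqueRealization G S)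
    (hx : x ∉ S) : y x = 0 :=
  notMem_support.1 fun h => hx (hy.2.1 h)

theorem contractibleSpace_cliqueRealization_singleton :
    ContractibleSpace (cliqueRealization G {x}) := by
  have hx : Pi.single x 1 ∈ cliqueRealization G {x} :=
    ⟨single_mem_stdSimplex ℝ x, Pi.support_single_subset, by
      exact (Set.pairwise_singleton x _).mono Pi.support_single_subset⟩
  have eq_single (y : cliqueRealization G {x}) : y = ⟨Pi.single x 1, hx⟩ := by
    obtain ⟨y, hy⟩ := y
    have off_x {v} (hv : v ≠ x) : y v = 0 := apply_eq_zero_of_mem_cliqueRealization hy hv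
    have at_x : y x = 1 := by
      rw [← hy.1.2, Fintype.sum_eq_single x fun _ => off_x]
    ext v
    obtain rfl | hv := eq_or_ne v x
    · simp [at_x]
    · simp [off_x hv, hv]
  have : Nonempty (cliqueRealization G {x}) := ⟨⟨_, hx⟩⟩
  have : Subsingleton (cliqueRealization G {x}) :=
    ⟨fun y z => (eq_single y).trans (eq_single z).symm⟩
  infer_instance

theorem conePoint_mem_cliqueRealization {k : V → ℝ}
    (hk : k ∈ cliqueRealization G (S ∩ G.neighborSet x)) {t : ℝ} (ht : t ∈ I) :
    conePoint x k t ∈ cliqueRealization G (insert x S) := by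
  have support_subset : support (conePoint x k t) ⊆ insert x (support k) := by
    intro v hv
    by_contra! h
    simp_all [conePoint]
  refine ⟨?_, support_subset.trans (insert_subset_insert fun v hv => (hk.2.1 hv).1), ?_⟩
  · exact convex_stdSimplex ℝ V hk.1 (single_mem_stdSimplex ℝ x) (sub_nonneg.2 ht.2) ht.1 (by ring)
  · exact (SimpleGraph.isClique_insert.2 ⟨hk.2.2, fun v hv _ => (hk.2.1 hv).2⟩).subset
      support_subset

theorem exists_conePoint_eq (hne : (cliqueRealization G (S ∩ G.neighborSet x)).Nonempty)
    {y : V → ℝ} (hy : y ∈ cliqueRealization G (insert x S)) (hx : y x ≠ 0) :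
    ∃ k ∈ cliqueRealization G (S ∩ G.neighborSet x), conePoint x k (y x) = y := by
  set w : V → ℝ := y - y x • Pi.single x 1 with hw
  have w_self : w x = 0 := by simp [hw]
  have w_of_ne {v} (hv : v ≠ x) : w v = y v := by simp [hw, hv]
  have w_nonneg : 0 ≤ w := fun v => by
    obtain rfl | hv := eq_or_ne v x
    · exact w_self.ge
    · exact (hy.1.1 v).trans_eq (w_of_ne hv).symm
  have sum_w : ∑ v, w v = 1 - y x := by simp [hw, Finset.sum_sub_distrib, ← Finset.mul_sum, hy.1.2]
  have support_w : support w ⊆ support y \ {x} := fun v hv => by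
    have hvx : v ≠ x := by rintro rfl; exact hv w_self
    exact ⟨by rwa [mem_support, ← w_of_ne hvx], hvx⟩
  obtain hyx | hyx := eq_or_ne (y x) 1
  · obtain ⟨k, hk⟩ := hne
    have w_eq_zero : w = 0 := (Fintype.sum_eq_zero_iff_of_nonneg w_nonneg).1 (by simp [sum_w, hyx])
    refine ⟨k, hk, ?_⟩
    rw [sub_eq_zero.1 w_eq_zero]
    simp [conePoint, hyx]
  · have one_sub_pos : 0 < 1 - y x :=
      sub_pos.2 (lt_of_le_of_ne (mem_Icc_of_mem_stdSimplex hy.1 x).2 hyx)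
    have support_k : support ((1 - y x)⁻¹ • w) ⊆ support y \ {x} :=
      (support_const_smul_subset _ w).trans support_w
    refine ⟨(1 - y x)⁻¹ • w, ⟨⟨?_, ?_⟩, fun v hv => ?_, hy.2.2.subset ?_⟩, ?_⟩
    · exact fun v => mul_nonneg (inv_nonneg.2 one_sub_pos.le) (w_nonneg v)
    · simp [← Finset.mul_sum, sum_w, one_sub_pos.ne']
    · obtain ⟨hvy, hvx⟩ := support_k hv
      exact ⟨(hy.2.1 hvy).resolve_left hvx, hy.2.2 hx hvy (Ne.symm hvx)⟩
    · exact support_k.trans sdiff_subset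
    · rw [conePoint, smul_inv_smul₀ one_sub_pos.ne', hw, sub_add_cancel]

/-- The cone over the link of `x` in `S`, parametrized by `conePoint`. -/
noncomputable def linkCone (G : SimpleGraph V) (S : Set V) (x : V) :
    C(cliqueRealization G (S ∩ G.neighborSet x) × I, cliqueRealization G (insert x S)) where
  toFun z := ⟨conePoint x z.1 z.2, conePoint_mem_cliqueRealization z.1.2 z.2.2⟩
  continuous_toFun := by unfold conePoint; fun_prop

theorem linkCone_apply_self (k : cliqueRealization G (S ∩ G.neighborSet x)) (t : I) :
    (linkCone G S x (k, t) : V → ℝ) x = t :=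
  conePoint_apply_self (apply_eq_zero_of_mem_cliqueRealization k.2 (by simp)) t

theorem isMappingCone_linkCone (hx : x ∉ S)
    (hne : (cliqueRealization G (S ∩ G.neighborSet x)).Nonempty) :
    IsMappingCone (inclusion (cliqueRealization_mono (G := G) inter_subset_left))
      (inclusion (cliqueRealization_mono (subset_insert x S))) (linkCone G S x) where
  base k := Subtype.ext (show conePoint x (k : V → ℝ) 0 = k by simp [conePoint])
  apex k k' := by ext; simp [linkCone, conePoint]
  injective := inclusion_injective (cliqueRealization_mono (subset_insert x S))
  eq_zero_of_eq {k t a} e := by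
    have apply_x : (linkCone G S x (k, t) : V → ℝ) x = 0 :=
      e ▸ apply_eq_zero_of_mem_cliqueRealization a.2 hx
    exact Subtype.ext ((linkCone_apply_self k t).symm.trans apply_x)
  eq_or_of_eq {k k' t t'} e := by
    obtain rfl : t = t' :=
      Subtype.ext (by rw [← linkCone_apply_self k t, e, linkCone_apply_self])
    refine ⟨rfl, .inr (or_iff_not_imp_left.2 fun ht => Subtype.ext ?_)⟩
    have smul_eq : (1 - t : ℝ) • (k : V → ℝ) = (1 - t : ℝ) • k' :=
      add_right_cancel (congrArg Subtype.val e)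
    exact smul_right_injective _ (sub_ne_zero.2 fun h => ht (Subtype.ext h.symm)) smul_eq
  isQuotientMap := by
    refine Continuous.isClosedMap (by fun_prop) |>.isQuotientMap (by fun_prop) fun y => ?_
    by_cases hyx : (y : V → ℝ) x = 0
    · exact ⟨.inl ⟨y, mem_cliqueRealization_of_apply_eq_zero y.2 hyx⟩, rfl⟩
    · obtain ⟨k, hk, hky⟩ := exists_conePoint_eq hne y.2 hyx
      exact ⟨.inr (⟨k, hk⟩, ⟨_, mem_Icc_of_mem_stdSimplex y.2.1 x⟩), Subtype.ext hky⟩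

theorem isHomotopyEquiv_inclusion_insert (hx : x ∉ S)
    [ContractibleSpace (cliqueRealization G (S ∩ G.neighborSet x))] :
    IsHomotopyEquiv (inclusion (cliqueRealization_mono (G := G) (subset_insert x S))) :=
  (isMappingCone_linkCone hx (nonempty_coe_sort.1 inferInstance)).isHomotopyEquiv

theorem isHomotopyEquiv_inclusion_of_forall_exists (hST : S ⊆ T)
    (h : ∀ U, S ⊂ U → U ⊆ T →
      ∃ x ∈ U \ S, ContractibleSpace (cliqueRealization G (U ∩ G.neighborSet x))) :
    IsHomotopyEquiv (inclusion (cliqueRealization_mono (G := G) hST)) := by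
  induction T using WellFoundedLT.induction with
  | ind T ih =>
    obtain rfl | hlt := hST.eq_or_ssubset
    · exact isHomotopyEquiv_homeomorph (.refl _)
    obtain ⟨x, ⟨hxT, hxS⟩, hlink⟩ := h T hlt subset_rfl
    obtain ⟨T', hxT', rfl⟩ : ∃ T', x ∉ T' ∧ insert x T' = T :=
      ⟨T \ {x}, by simp, by simp [hxT]⟩
    have hST' : S ⊆ T' := (subset_insert_iff_of_notMem hxS).1 hST
    rw [insert_inter_of_notMem (by simp)] at hlink
    exact (isHomotopyEquiv_inclusion_insert hxT').comp
      (ih T' (ssubset_insert hxT') hST' fun U hSU hUT =>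
        h U hSU (hUT.trans (subset_insert x T')))

theorem contractibleSpace_cliqueRealization_of_join [ContractibleSpace (cliqueRealization G S)]
    (hST : S ⊆ T) (h : ∀ x ∈ T \ S, S ⊆ G.neighborSet x) :
    ContractibleSpace (cliqueRealization G T) := by
  induction T using WellFoundedLT.induction with
  | ind T ih =>
    refine (isHomotopyEquiv_inclusion_of_forall_exists hST fun U hSU hUT => ?_).contractibleSpace
    obtain ⟨x, hxU, hxS⟩ := exists_of_ssubset hSU
    have link_ssubset : U ∩ G.neighborSet x ⊂ T :=
      (ssubset_iff_of_subset (inter_subset_left.trans hUT)).2 ⟨x, hUT hxU, by simp⟩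
    exact ⟨x, ⟨hxU, hxS⟩, ih _ link_ssubset
      (subset_inter hSU.subset (h x ⟨hUT hxU, hxS⟩)) fun v hv => h v ⟨hUT hv.1.1, hv.2⟩⟩

end CliqueRealization

section Pushforward

variable {V W : Type*} {φ : V → W}

theorem support_funOnFinite_linearMap_subset [Finite V] [Finite W] (φ : V → W) (y : V → ℝ) :
    support (FunOnFinite.linearMap ℝ ℝ φ y) ⊆ φ '' support y := by
  have := Fintype.ofFinite V
  intro w hw
  rw [mem_support, FunOnFinite.linearMap_apply_apply] at hw
  obtain ⟨v, hv, hyv⟩ := Finset.exists_ne_zero_of_sum_ne_zero hw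
  exact ⟨v, hyv, (Finset.mem_filter.1 hv).2⟩

theorem funOnFinite_linearMap_apply_of_injective [Finite V] [Finite W] (hφ : Injective φ)
    (y : V → ℝ) (v : V) :
    FunOnFinite.linearMap ℝ ℝ φ y (φ v) = y v := by
  have := Fintype.ofFinite V
  simp [FunOnFinite.linearMap_apply_apply, hφ.eq_iff, Finset.sum_filter]

variable [Fintype V] [Fintype W] {G : SimpleGraph V} {H : SimpleGraph W} {S : Set V} {T : Set W}

theorem funOnFinite_linearMap_mem_cliqueRealization
    (hφ : ∀ {v w}, G.Adj v w → φ v ≠ φ w → H.Adj (φ v) (φ w)) (hST : MapsTo φ S T) {y : V → ℝ}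
    (hy : y ∈ cliqueRealization G S) :
    FunOnFinite.linearMap ℝ ℝ φ y ∈ cliqueRealization H T := by
  have image_isClique : H.IsClique (φ '' support y) := by
    rintro _ ⟨v, hv, rfl⟩ _ ⟨w, hw, rfl⟩ hne
    exact hφ (hy.2.2 hv hw (ne_of_apply_ne φ hne)) hne
  exact ⟨stdSimplex.image_linearMap φ (mem_image_of_mem _ hy.1),
    (support_funOnFinite_linearMap_subset φ y).trans ((hST.mono_left hy.2.1).image_subset),
    image_isClique.subset (support_funOnFinite_linearMap_subset φ y)⟩

/-- The affine extension of a map of vertices sending edges to edges or to single vertices. -/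
noncomputable def cliqueRealizationMap (φ : V → W)
    (hφ : ∀ {v w}, G.Adj v w → φ v ≠ φ w → H.Adj (φ v) (φ w)) (hST : MapsTo φ S T) :
    C(cliqueRealization G S, cliqueRealization H T) where
  toFun y := ⟨FunOnFinite.linearMap ℝ ℝ φ y, funOnFinite_linearMap_mem_cliqueRealization hφ hST y.2⟩
  continuous_toFun := by
    have := FunOnFinite.continuous_linearMap ℝ ℝ φ
    fun_prop

theorem comp_mem_cliqueRealization_univ (e : G ↪g H) {y : W → ℝ}
    (hy : y ∈ cliqueRealization H (range e)) : y ∘ e ∈ cliqueRealization G univ := by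
  refine ⟨⟨fun v => hy.1.1 (e v), ?_⟩, subset_univ _, fun v hv w hw hne => ?_⟩
  · rw [← hy.1.2]
    exact Fintype.sum_of_injective e e.injective _ _
      (fun _ hw => apply_eq_zero_of_mem_cliqueRealization hy hw) fun _ => rfl
  · exact e.map_adj_iff.1 (hy.2.2 hv hw (e.injective.ne hne))

/-- The homeomorphism from the realization of a graph onto the part spanned by its vertices of the
realization of a graph in which it embeds. -/
noncomputable def cliqueRealizationHomeomorphRange (e : G ↪g H) :
    cliqueRealization G univ ≃ₜ cliqueRealization H (range e) where
  toFun := cliqueRealizationMap e (fun h _ => e.map_adj_iff.2 h) fun v _ => mem_range_self v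
  invFun y := ⟨y ∘ e, comp_mem_cliqueRealization_univ e y.2⟩
  left_inv y := by
    ext v
    exact funOnFinite_linearMap_apply_of_injective e.injective y v
  right_inv y := by
    ext w
    by_cases hw : w ∈ range e
    · obtain ⟨v, rfl⟩ := hw
      exact funOnFinite_linearMap_apply_of_injective e.injective _ v
    · exact (apply_eq_zero_of_mem_cliqueRealization (Subtype.prop _) hw).trans
        (apply_eq_zero_of_mem_cliqueRealization y.2 hw).symm
  continuous_invFun := ((Pi.continuous_precomp e).comp continuous_subtype_val).subtype_mk _

/-- The map of realizations induced by an embedding of graphs. -/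
noncomputable def cliqueRealizationEmbedding (e : G ↪g H) :
    C(cliqueRealization G univ, cliqueRealization H univ) :=
  cliqueRealizationMap e (fun h _ => e.map_adj_iff.2 h) (mapsTo_univ _ _)

theorem isHomotopyEquiv_cliqueRealizationEmbedding (e : G ↪g H)
    (he : IsHomotopyEquiv (inclusion (cliqueRealization_mono (G := H) (subset_univ (range e))))) :
    IsHomotopyEquiv (cliqueRealizationEmbedding e) :=
  he.comp (isHomotopyEquiv_homeomorph (cliqueRealizationHomeomorphRange e))

end Pushforward

section MappingCylinder

variable {P Q : Type*} [Preorder P] [Preorder Q] {f : P → Q}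

/-- The graph joining distinct comparable elements of `P`; its cliques are the chains of `P`. -/
def comparabilityGraph (P : Type*) [Preorder P] : SimpleGraph P :=
  .fromRel (· ≤ ·)

theorem comparabilityGraph_adj {p p' : P} :
    (comparabilityGraph P).Adj p p' ↔ p ≠ p' ∧ (p ≤ p' ∨ p' ≤ p) :=
  SimpleGraph.fromRel_adj ..

theorem comparabilityGraph_adj_of_monotone (hf : Monotone f) {p p' : P}
    (h : (comparabilityGraph P).Adj p p') (hne : f p ≠ f p') :
    (comparabilityGraph Q).Adj (f p) (f p') :=
  comparabilityGraph_adj.2 ⟨hne, (comparabilityGraph_adj.1 h).2.imp (hf ·) (hf ·)⟩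

/-- The comparability graph of the mapping cylinder of `f`, that is of the disjoint union of `P` and
`Q` ordered by additionally putting `p` below `q` whenever `f p ≤ q`. -/
def cylinderGraph (f : P → Q) : SimpleGraph (P ⊕ Q) :=
  .fromRel fun
    | .inl p, .inl p' => p ≤ p'
    | .inl p, .inr q => f p ≤ q
    | .inr _, .inl _ => False
    | .inr q, .inr q' => q ≤ q'

theorem cylinderGraph_adj_inl_inr {p : P} {q : Q} :
    (cylinderGraph f).Adj (.inl p) (.inr q) ↔ f p ≤ q := by
  simp [cylinderGraph]

/-- The copy of `P` in the mapping cylinder. -/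
def cylinderInl (f : P → Q) : comparabilityGraph P ↪g cylinderGraph f where
  toEmbedding := .inl
  map_rel_iff' := by simp [cylinderGraph, comparabilityGraph]

/-- The copy of `Q` in the mapping cylinder. -/
def cylinderInr (f : P → Q) : comparabilityGraph Q ↪g cylinderGraph f where
  toEmbedding := .inr
  map_rel_iff' := by simp [cylinderGraph, comparabilityGraph]

/-- The fiber of `f` over `Q_{≤ q}`, at the bottom of the mapping cylinder. -/
def cylinderFiber (f : P → Q) (q : Q) :
    comparabilityGraph {p // f p ≤ q} ↪g cylinderGraph f :=
  .trans ⟨.subtype _, by simp [comparabilityGraph]⟩ (cylinderInl f)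

theorem comparabilityGraph_adj_of_cylinderGraph_adj (hf : Monotone f) :
    ∀ {v w}, (cylinderGraph f).Adj v w → Sum.elim f id v ≠ Sum.elim f id w →
      (comparabilityGraph Q).Adj (Sum.elim f id v) (Sum.elim f id w)
  | .inl _, .inl _, h, hne =>
    comparabilityGraph_adj_of_monotone hf ((cylinderInl f).map_adj_iff.1 h) hne
  | .inl _, .inr _, h, hne =>
    comparabilityGraph_adj.2 ⟨hne, .inl ((cylinderGraph_adj_inl_inr (f := f)).1 h)⟩
  | .inr _, .inl _, h, hne =>
    comparabilityGraph_adj.2 ⟨hne, .inr ((cylinderGraph_adj_inl_inr (f := f)).1 h.symm)⟩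
  | .inr _, .inr _, h, _ => (cylinderInr f).map_adj_iff.1 h

variable [Fintype P] [Fintype Q]

theorem isHomotopyEquiv_inclusion_range_cylinderInl
    (h : ∀ q, ContractibleSpace (cliqueRealization (comparabilityGraph {p // f p ≤ q}) univ)) :
    IsHomotopyEquiv (inclusion (cliqueRealization_mono (G := cylinderGraph f)
      (subset_univ (range (cylinderInl f))))) := by
  refine isHomotopyEquiv_inclusion_of_forall_exists (subset_univ _) fun U hU _ => ?_
  obtain ⟨v, hvU, hv⟩ := exists_of_ssubset hU
  obtain ⟨q₁, rfl⟩ : ∃ q₁, .inr q₁ = v := by cases v <;> simp_all [cylinderInl]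
  obtain ⟨q, hqU, hq⟩ := (toFinite (Sum.inr ⁻¹' U)).exists_minimal ⟨q₁, hvU⟩
  refine ⟨.inr q, ⟨hqU, by simp [cylinderInl]⟩, ?_⟩
  have := h q
  have := (cliqueRealizationHomeomorphRange (cylinderFiber f q)).symm.contractibleSpace
  refine contractibleSpace_cliqueRealization_of_join (S := range (cylinderFiber f q)) ?_ ?_
  · rintro _ ⟨p, rfl⟩
    exact ⟨hU.subset ⟨p, rfl⟩, (cylinderGraph_adj_inl_inr.2 p.2).symm⟩
  · rintro (p | q') ⟨⟨hU', hadj⟩, hp⟩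
    · exact (hp ⟨⟨p, cylinderGraph_adj_inl_inr.1 hadj.symm⟩, rfl⟩).elim
    · rintro _ ⟨p, rfl⟩
      have q_le_q' : q ≤ q' :=
        (comparabilityGraph_adj.1 ((cylinderInr f).map_adj_iff.1 hadj)).2.elim id (hq hU')
      exact (cylinderGraph_adj_inl_inr.2 (p.2.trans q_le_q')).symm

theorem isHomotopyEquiv_inclusion_range_cylinderInr (hf : Monotone f) :
    IsHomotopyEquiv (inclusion (cliqueRealization_mono (G := cylinderGraph f)
      (subset_univ (range (cylinderInr f))))) := by
  refine isHomotopyEquiv_inclusion_of_forall_exists (subset_univ _) fun U hU _ => ?_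
  obtain ⟨v, hvU, hv⟩ := exists_of_ssubset hU
  obtain ⟨p₁, rfl⟩ : ∃ p₁, .inl p₁ = v := by cases v <;> simp_all [cylinderInr]
  obtain ⟨p, hpU, hp⟩ := (toFinite (Sum.inl ⁻¹' U)).exists_maximal ⟨p₁, hvU⟩
  refine ⟨.inl p, ⟨hpU, by simp [cylinderInr]⟩, ?_⟩
  have := contractibleSpace_cliqueRealization_singleton (G := cylinderGraph f) (x := .inr (f p))
  refine contractibleSpace_cliqueRealization_of_join (S := {.inr (f p)}) ?_ ?_
  · rintro _ rfl
    exact ⟨hU.subset ⟨f p, rfl⟩, cylinderGraph_adj_inl_inr.2 le_rfl⟩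
  · rintro (p' | q) ⟨⟨hU', hadj⟩, hq⟩ _ rfl
    · have p'_le_p : p' ≤ p :=
        (comparabilityGraph_adj.1 ((cylinderInl f).map_adj_iff.1 hadj)).2.elim (hp hU') id
      exact cylinderGraph_adj_inl_inr.2 (hf p'_le_p)
    · refine (cylinderInr f).map_adj_iff.2 (comparabilityGraph_adj.2 ⟨?_, .inr ?_⟩)
      · rintro rfl
        exact hq rfl
      · exact cylinderGraph_adj_inl_inr.1 hadj

/-- The collapse of the mapping cylinder of `f` onto its end `Q`. -/
noncomputable def cylinderCollapse (hf : Monotone f) :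
    C(cliqueRealization (cylinderGraph f) univ, cliqueRealization (comparabilityGraph Q) univ) :=
  cliqueRealizationMap (Sum.elim f id) (comparabilityGraph_adj_of_cylinderGraph_adj hf)
    (mapsTo_univ _ _)

theorem cylinderCollapse_comp_inl (hf : Monotone f) :
    (cylinderCollapse hf).comp (cliqueRealizationEmbedding (cylinderInl f)) =
      cliqueRealizationMap f (comparabilityGraph_adj_of_monotone hf) (mapsTo_univ f univ) := by
  ext1 y
  have elim_inl := FunOnFinite.linearMap_comp ℝ ℝ (.inl : P → P ⊕ Q) (Sum.elim f id)
  exact Subtype.ext (LinearMap.congr_fun elim_inl.symm y)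

theorem cylinderCollapse_comp_inr (hf : Monotone f) :
    (cylinderCollapse hf).comp (cliqueRealizationEmbedding (cylinderInr f)) = .id _ := by
  ext1 y
  have elim_inr := FunOnFinite.linearMap_comp ℝ ℝ (.inr : Q → P ⊕ Q) (Sum.elim f id)
  exact Subtype.ext
    (LinearMap.congr_fun (elim_inr.symm.trans (FunOnFinite.linearMap_id ℝ ℝ Q)) y)

theorem isHomotopyEquiv_cylinderCollapse (hf : Monotone f) :
    IsHomotopyEquiv (cylinderCollapse hf) :=
  (isHomotopyEquiv_cliqueRealizationEmbedding (cylinderInr f)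
    (isHomotopyEquiv_inclusion_range_cylinderInr hf)).of_comp_homotopic_id
      (cylinderCollapse_comp_inr hf ▸ .refl _)

theorem isHomotopyEquiv_cliqueRealizationMap_of_monotone (hf : Monotone f)
    (h : ∀ q, ContractibleSpace (cliqueRealization (comparabilityGraph {p // f p ≤ q}) univ)) :
    IsHomotopyEquiv
      (cliqueRealizationMap f (comparabilityGraph_adj_of_monotone hf) (mapsTo_univ f univ)) := by
  rw [← cylinderCollapse_comp_inl]
  exact (isHomotopyEquiv_cylinderCollapse hf).comp
    (isHomotopyEquiv_cliqueRealizationEmbedding (cylinderInl f)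
      (isHomotopyEquiv_inclusion_range_cylinderInl h))

end MappingCylinder

section OrderComplex

variable {P Q : Type*} [PartialOrder P] [PartialOrder Q] [Fintype P] [Fintype Q]

theorem mem_cliqueRealization_comparabilityGraph_iff {y : P → ℝ} :
    y ∈ cliqueRealization (comparabilityGraph P) univ ↔
      (∀ p, 0 ≤ y p) ∧ ∑ p, y p = 1 ∧ IsChain (· ≤ ·) {p | y p ≠ 0} := by
  simp only [cliqueRealization, stdSimplex, SimpleGraph.isClique_iff, Set.Pairwise, IsChain,
    comparabilityGraph_adj, mem_ofPred_eq, subset_univ, mem_support]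
  grind

namespace GeomReal

variable (P) in
/-- The order complex of `P` is the clique complex of its comparability graph. -/
def homeomorph :
    GeomReal P ≃ₜ cliqueRealization (comparabilityGraph P) univ :=
  (Homeomorph.refl _).subtype fun _ => mem_cliqueRealization_comparabilityGraph_iff.symm

/-- The affine extension of a monotone map, making `GeomReal` a functor. -/
noncomputable def map (f : P → Q) (hf : Monotone f) : C(GeomReal P, GeomReal Q) where
  toFun y := ⟨FunOnFinite.linearMap ℝ ℝ f y, mem_cliqueRealization_comparabilityGraph_iff.1 <|
    funOnFinite_linearMap_mem_cliqueRealization (comparabilityGraph_adj_of_monotone hf)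
      (mapsTo_univ _ _) (mem_cliqueRealization_comparabilityGraph_iff.2 y.2)⟩
  continuous_toFun := by
    have := FunOnFinite.continuous_linearMap ℝ ℝ f
    fun_prop

end GeomReal

end OrderComplex

theorem quillen_fiber_lemma_le_general {P Q : Type*} [Fintype P] [PartialOrder P]
    [Fintype Q] [PartialOrder Q] (f : P → Q) (hf : Monotone f)
    (h : ∀ q : Q, ContractibleSpace (GeomReal {p : P // f p ≤ q})) :
    IsHomotopyEquiv (GeomReal.map f hf) := by
  have map_isHomotopyEquiv := isHomotopyEquiv_cliqueRealizationMap_of_monotone hf fun q =>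
    (GeomReal.homeomorph {p // f p ≤ q}).symm.contractibleSpace
  exact (isHomotopyEquiv_homeomorph (GeomReal.homeomorph Q).symm).comp
    (map_isHomotopyEquiv.comp (isHomotopyEquiv_homeomorph (GeomReal.homeomorph P)))

/-- Quillen's fiber lemma (lower fibers): if all preimages of principal down-sets
are contractible, the realizations are homotopy equivalent. -/
theorem quillen_fiber_lemma_le {P Q : Type} [Fintype P] [PartialOrder P]
    [Fintype Q] [PartialOrder Q] (f : P → Q) (hf : Monotone f)
    (h : ∀ q : Q, ContractibleSpace (GeomReal {p : P // f p ≤ q})) :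
    Nonempty (ContinuousMap.HomotopyEquiv (GeomReal P) (GeomReal Q)) :=
  let ⟨e, _⟩ := quillen_fiber_lemma_le_general f hf h
  ⟨e⟩
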